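/- Equidistribution of the forged tag: let w_1, …, w_m ∈ F^N be linearly independent and let y ∈ F^N with y ∉ span(w_1, …, w_m). For every t_1, …, t_m ∈ F, the solution set S = {k ∈ F^N : w_i · k = t_i for all i} has exactly q^{N−m} elements, and for every t* ∈ F, q · |{k ∈ S : y · k = t*}| = |S|; i.e., exactly a 1/q fraction of the keys consistent with all observed tags assign any given tag value t* to the corrupted packet y. -/

import Mathlib

/-!
Linear independence of the functionals `w_i` says that `c ↦ ∑ c_i w_i` is injective. This map is
the transpose of `k ↦ (w_i k)_i`, which is therefore surjective, so each of its fibres is a coset of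
its kernel, a space of dimension `N - m`. As `y ∉ span (w_i)`, the functionals `y, w_1, …, w_m` are
independent as well, so imposing `y k = t*` gives a fibre of the same kind with `m + 1` in place of
`m`, hence `q` times smaller.
-/

open Module

theorem ncard_fiber_of_surjective {K V W : Type*} [DivisionRing K] [AddCommGroup V] [Module K V]
    [Module.Finite K V] [AddCommGroup W] [Module K W] {f : V →ₗ[K] W}
    (hf : Function.Surjective f) (b : W) :
    (f ⁻¹' {b}).ncard = Nat.card K ^ (finrank K V - finrank K W) := by
  have hker : finrank K f.ker = finrank K V - finrank K W := by
    rw [← f.finrank_range_add_finrank_ker, f.range_eq_top.mpr hf, finrank_top,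
      Nat.add_sub_cancel_left]
  calc (f ⁻¹' {b}).ncard
      = Nat.card f.ker :=
        Nat.card_congr (AddMonoidHom.fiberEquivKerOfSurjective (f := f.toAddMonoidHom) hf b)
    _ = Nat.card K ^ (finrank K V - finrank K W) := by rw [natCard_eq_pow_finrank (K := K), hker]

section Dual

variable {K V ι : Type*} [Field K] [AddCommGroup V] [Module K V]

theorem surjective_pi_of_linearIndependent [Finite ι] {w : ι → Dual K V}
    (hw : LinearIndependent K w) : Function.Surjective (LinearMap.pi w) := by
  classical
  cases nonempty_fintype ι
  have hdual : (LinearMap.pi w).dualMap ∘ₗ (dotProductEquiv K ι).toLinearMap =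
      Fintype.linearCombination K w := by
    ext; simp
  have hinj := hw.fintypeLinearCombination_injective
  rw [← hdual, LinearMap.coe_comp] at hinj
  exact LinearMap.dualMap_injective_iff.mp
    ((Function.Injective.of_comp_iff' _ (dotProductEquiv K ι).bijective).mp hinj)

theorem ncard_setOf_forall_dual_apply_eq [Module.Finite K V] [Fintype ι] {w : ι → Dual K V}
    (hw : LinearIndependent K w) (t : ι → K) :
    {v | ∀ i, w i v = t i}.ncard = Nat.card K ^ (finrank K V - Fintype.card ι) := by
  have hfiber : {v | ∀ i, w i v = t i} = LinearMap.pi w ⁻¹' {t} := by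
    ext; simp [funext_iff]
  rw [hfiber, ncard_fiber_of_surjective (surjective_pi_of_linearIndependent hw),
    finrank_fintype_fun_eq_card]

theorem forged_tag_equidistribution_general [Fintype K] [Module.Finite K V] [Fintype ι]
    {w : ι → Dual K V} (hw : LinearIndependent K w) {y : Dual K V}
    (hy : y ∉ Submodule.span K (Set.range w)) (t : ι → K) :
    {v | ∀ i, w i v = t i}.ncard = Fintype.card K ^ (finrank K V - Fintype.card ι) ∧
      ∀ s : K, Fintype.card K * {v | (∀ i, w i v = t i) ∧ y v = s}.ncard =
        {v | ∀ i, w i v = t i}.ncard := by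
  have hcard := ncard_setOf_forall_dual_apply_eq hw t
  rw [Nat.card_eq_fintype_card] at hcard
  refine ⟨hcard, fun s ↦ ?_⟩
  have hyw := hw.option hy
  have hlt : Fintype.card ι < finrank K V := by
    simpa [Subspace.dual_finrank_eq] using hyw.fintype_card_le_finrank
  have hslice := ncard_setOf_forall_dual_apply_eq hyw (fun o ↦ o.casesOn' s t)
  simp only [Option.forall, Option.casesOn'_none, Option.casesOn'_some, Fintype.card_option,
    Nat.card_eq_fintype_card, and_comm (a := y _ = s)] at hslice
  rw [hslice, hcard, ← pow_succ']
  congr 1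
  lia

end Dual

/-- equidistribution of the forged tag.  If `w_1, …, w_m ∈ F^N` are
linearly independent and `y ∉ span(w_1, …, w_m)`, then for every `t_1, …, t_m` the
solution set `S = {k : w_i · k = t_i for all i}` has exactly `q^(N−m)` elements,
and for every `t*`, `q · |{k ∈ S : y · k = t*}| = |S|`: exactly a `1/q` fraction of
the consistent keys assign the tag value `t*` to the corrupted packet `y`. -/
theorem forged_tag_equidistribution
    (q N m : ℕ) (hq : q.Prime)
    (w : Fin m → Fin N → ZMod q)
    (hw : LinearIndependent (ZMod q) w)
    (y : Fin N → ZMod q)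
    (hy : y ∉ Submodule.span (ZMod q) (Set.range w))
    (t : Fin m → ZMod q) :
    Set.ncard {k : Fin N → ZMod q |
        ∀ i : Fin m, (∑ r : Fin N, w i r * k r) = t i} = q ^ (N - m) ∧
      ∀ tstar : ZMod q,
        q * Set.ncard {k : Fin N → ZMod q |
            (∀ i : Fin m, (∑ r : Fin N, w i r * k r) = t i) ∧
              (∑ r : Fin N, y r * k r) = tstar}
          = Set.ncard {k : Fin N → ZMod q |
              ∀ i : Fin m, (∑ r : Fin N, w i r * k r) = t i} := by
  have : Fact q.Prime := ⟨hq⟩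
  let e := dotProductEquiv (ZMod q) (Fin N)
  have hey := (Submodule.apply_mem_span_image_iff_mem_span (f := e.toLinearMap)
    e.injective).not.mpr hy
  rw [← Set.range_comp] at hey
  simpa [e, dotProduct] using
    forged_tag_equidistribution_general (hw.map' e.toLinearMap e.ker) hey t
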